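/- arXiv:1907.12106 — 3 statements merged into one kernel-verified Lean document; each statement's English description precedes it below -/
import Mathlib

section
/- Let ε, d > 0 be real numbers, let N be an even positive integer, and let G = (V,E) be an N-vertex digraph. Suppose that for every partition of V into two disjoint sets V_1, V_2 with |V_1| = |V_2| = N/2, the number of edges (u,v) ∈ E with u ∈ V_1 and v ∈ V_2 is at least ε·d·N. Then G is ε-far from acyclic: every feedback arc set of G has size at least ε·d·N. -/
/-- A digraph given by an edge relation `E` is acyclic if it has no directed cycle,
i.e. no sequence `v 0, v 1, …, v k` with `k ≥ 1`, `v 0 = v k`, and consecutive edges. -/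
def Acyclic {V : Type*} (E : V → V → Prop) : Prop :=
  ¬ ∃ (k : ℕ) (v : ℕ → V), 1 ≤ k ∧ v 0 = v k ∧ ∀ i < k, E (v i) (v (i + 1))

/-!
Deleting a feedback arc set `S` leaves an acyclic digraph, whose vertices can be collected one by
one, each after all its remaining out-neighbours. The first `N / 2` vertices collected form a set
`A` that no remaining edge leaves, so all edges from `A` to its complement lie in `S`.
-/

theorem Acyclic.wellFounded_swap {V : Type*} [Finite V] {R : V → V → Prop} (hR : Acyclic R) :
    WellFounded (Function.swap R) := by
  refine wellFounded_iff_isEmpty_descending_chain.mpr ⟨fun ⟨w, hw⟩ => ?_⟩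
  obtain ⟨a, b, hab, hwab⟩ : ∃ a b, a < b ∧ w a = w b := by
    obtain ⟨a, b, hne, heq⟩ := Finite.exists_ne_map_eq_of_infinite w
    exact hne.lt_or_gt.elim (⟨a, b, ·, heq⟩) (⟨b, a, ·, heq.symm⟩)
  refine hR ⟨b - a, fun i => w (a + i), by lia, ?_, fun i _ => hw (a + i)⟩
  simpa only [add_zero, Nat.add_sub_cancel' hab.le] using hwab

theorem exists_finset_card_eq_forall_rel_mem {V : Type*} {r : V → V → Prop} (hr : WellFounded r)
    {k : ℕ} (hk : k ≤ ENat.card V) :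
    ∃ A : Finset V, A.card = k ∧ ∀ u ∈ A, ∀ v, r v u → v ∈ A := by
  induction k with
  | zero => exact ⟨∅, by simp⟩
  | succ k ih =>
    have hlt : (k : ℕ∞) < ENat.card V := lt_of_lt_of_le (by exact_mod_cast k.lt_succ_self) hk
    obtain ⟨A, hAcard, hAclosed⟩ := ih hlt.le
    have hcompl : ∃ x, x ∉ A := by
      by_contra! hall
      have huniv : (A : Set V) = Set.univ := Set.eq_univ_of_forall hall
      rw [← Set.encard_univ, ← huniv, Set.encard_coe_eq_coe_finsetCard, hAcard] at hlt
      exact hlt.false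
    obtain ⟨x, hxA, hxmin⟩ := hr.has_min {x | x ∉ A} hcompl
    have hx : ∀ v, r v x → v ∈ A := fun v hvx => by_contra fun hv => hxmin v hv hvx
    refine ⟨A.cons x hxA, by rw [Finset.card_cons, hAcard], fun u hu v hvu => ?_⟩
    refine Finset.mem_cons_of_mem ?_
    rcases Finset.mem_cons.mp hu with rfl | huA
    exacts [hx v hvu, hAclosed u huA v hvu]

theorem balanced_cuts_imply_far_from_acyclic_general {V : Type*} [Fintype V] [DecidableEq V]
    {k : ℕ} (hk : k ≤ Fintype.card V) {c : ℝ} {E : Finset (V × V)}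
    (hcut : ∀ A : Finset V, A.card = k →
      c ≤ ((E.filter (fun e => e.1 ∈ A ∧ e.2 ∈ Aᶜ)).card : ℝ))
    {S : Finset (V × V)} (hS : Acyclic (fun u v => (u, v) ∈ E \ S)) :
    c ≤ (S.card : ℝ) := by
  obtain ⟨A, hAcard, hAclosed⟩ :=
    exists_finset_card_eq_forall_rel_mem hS.wellFounded_swap (k := k) (by simpa using hk)
  have hcutS : E.filter (fun e => e.1 ∈ A ∧ e.2 ∈ Aᶜ) ⊆ S := by
    intro e he
    obtain ⟨heE, heA, heA'⟩ := Finset.mem_filter.mp he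
    by_contra heS
    exact Finset.mem_compl.mp heA' (hAclosed e.1 heA e.2 (Finset.mem_sdiff.mpr ⟨heE, heS⟩))
  exact (hcut A hAcard).trans (by exact_mod_cast Finset.card_le_card hcutS)

/-- If `N = |V|` is even and positive and every balanced partition
`(V₁, V₂)` of `V` has at least `ε·d·N` edges from `V₁` to `V₂`, then `G` is `ε`-far
from acyclic: every feedback arc set has size at least `ε·d·N`. -/
theorem balanced_cuts_imply_far_from_acyclic {V : Type*} [Fintype V] [DecidableEq V]
    (ε d : ℝ) (hε : 0 < ε) (hd : 0 < d)
    (hNpos : 0 < Fintype.card V) (hNeven : Even (Fintype.card V))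
    (E : Finset (V × V)) (hirr : ∀ e ∈ E, e.1 ≠ e.2)
    (hcut : ∀ V₁ V₂ : Finset V, Disjoint V₁ V₂ → V₁ ∪ V₂ = Finset.univ →
      V₁.card = Fintype.card V / 2 → V₂.card = Fintype.card V / 2 →
      ε * d * (Fintype.card V : ℝ)
        ≤ ((E.filter (fun e => e.1 ∈ V₁ ∧ e.2 ∈ V₂)).card : ℝ)) :
    ∀ S ⊆ E, Acyclic (fun u v => (u, v) ∈ E \ S) →
      ε * d * (Fintype.card V : ℝ) ≤ (S.card : ℝ) := by
  refine fun S _ => balanced_cuts_imply_far_from_acyclic_general (Nat.div_le_self _ 2) fun A hA =>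
    hcut A Aᶜ disjoint_compl_right A.union_compl hA ?_
  rw [Finset.card_compl, hA]
  grind
end

section
/- Let G = (V,E) be a finite digraph equipped with a Bender–Ron coloring c : V → {0,1,…,L} that additionally satisfies the sink condition: every vertex with no outgoing edge has color L. If u ∈ V satisfies c(u) = 0 (u is blue) and there is a directed path with ℓ edges from u to a vertex with no outgoing edge, then ℓ ≥ L/2 + 1. -/
/-!
An edge leaving a blue vertex ends at a color at most `L / 2`, and every edge raises the maximum of
`L / 2` and the color by at most one. So the first edge of a walk from a blue vertex reaches a color
at most `L / 2`, and at least `L - L / 2` further edges are needed to reach color `L`.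
-/

/-- Bender–Ron colorings of the digraph with edge relation `E`: color `0` is blue, and color
`i ≥ 1` is layer `i` of the red vertices. The number `L` of layers may be odd, in which case `L / 2`
is rounded down, and colors above `L` are possible, but only at isolated vertices. -/
def IsBenderRonColoring {V : Type*} (E : V → V → Prop) (L : ℕ) (c : V → ℕ) : Prop :=
  ∀ u v, E u v →
    (c u = 0 ∧ c v = 0) ∨
    (c u = 0 ∧ 1 ≤ c v ∧ c v ≤ L / 2) ∨
    (1 ≤ c u ∧ c u < L ∧ c v = c u + 1)

namespace IsBenderRonColoring

variable {V : Type*} {E : V → V → Prop} {L : ℕ} {c : V → ℕ}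

theorem color_le_half_of_blue (hc : IsBenderRonColoring E L c) {u v : V} (huv : E u v)
    (hu : c u = 0) : c v ≤ L / 2 := by
  rcases hc u v huv with ⟨_, hv⟩ | ⟨_, _, hv⟩ | ⟨hred, _, _⟩ <;> omega

theorem color_le_max_half_succ (hc : IsBenderRonColoring E L c) {u v : V} (huv : E u v) :
    c v ≤ max (L / 2) (c u + 1) := by
  rcases hc u v huv with ⟨_, hv⟩ | ⟨_, _, hv⟩ | ⟨_, _, hv⟩ <;> omega

theorem color_le_half_add_length (hc : IsBenderRonColoring E L c) {w : ℕ → V}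
    (hstart : c (w 0) ≤ L / 2) {n : ℕ} (hedges : ∀ a < n, E (w a) (w (a + 1))) :
    c (w n) ≤ L / 2 + n := by
  induction n with
  | zero => exact hstart
  | succ n ih =>
    have hprev : c (w n) ≤ L / 2 + n := ih fun a ha => hedges a (ha.trans n.lt_succ_self)
    have hlast : c (w (n + 1)) ≤ max (L / 2) (c (w n) + 1) :=
      hc.color_le_max_half_succ (hedges n n.lt_succ_self)
    omega

end IsBenderRonColoring

theorem blue_to_sink_long_general {V : Type*} {E : V → V → Prop} {L : ℕ} {c : V → ℕ}
    (hc : IsBenderRonColoring E L c) {ℓ : ℕ} {w : ℕ → V} (hblue : c (w 0) = 0)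
    (hred : c (w ℓ) ≠ 0) (hedges : ∀ a < ℓ, E (w a) (w (a + 1))) :
    c (w ℓ) < L / 2 + ℓ := by
  cases ℓ with
  | zero => exact absurd hblue hred
  | succ n =>
    have hfirst : c (w 1) ≤ L / 2 := hc.color_le_half_of_blue (hedges 0 n.succ_pos) hblue
    have htail : c (w (n + 1)) ≤ L / 2 + n :=
      hc.color_le_half_add_length (w := fun a => w (a + 1)) hfirst
        fun a ha => hedges (a + 1) (Nat.succ_lt_succ ha)
    exact Nat.lt_succ_of_le htail

/-- In a finite digraph with a Bender–Ron coloring `c : V → {0,1,…,L}`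
satisfying the sink condition (every sink has color `L`), any directed path with `ℓ` edges
from a blue vertex to a sink satisfies `ℓ ≥ L/2 + 1`. -/
theorem blue_to_sink_long {V : Type*} [Fintype V]
    (E : V → V → Prop) (hirr : ∀ v, ¬ E v v)
    (L : ℕ) (hLpos : 0 < L) (hLeven : Even L)
    (c : V → ℕ) (hcL : ∀ v, c v ≤ L)
    (hcol : ∀ u v, E u v →
      (c u = 0 ∧ c v = 0) ∨
      (c u = 0 ∧ 1 ≤ c v ∧ c v ≤ L / 2) ∨
      (1 ≤ c u ∧ c u < L ∧ c v = c u + 1))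
    (hsink : ∀ v, (∀ x, ¬ E v x) → c v = L)
    (u v : V) (hcu : c u = 0)
    (ℓ : ℕ) (w : ℕ → V) (hw0 : w 0 = u) (hwℓ : w ℓ = v)
    (hinj : ∀ a ≤ ℓ, ∀ b ≤ ℓ, w a = w b → a = b)
    (hedges : ∀ a < ℓ, E (w a) (w (a + 1)))
    (hvsink : ∀ x, ¬ E v x) :
    L / 2 + 1 ≤ ℓ := by
  have htop : c (w ℓ) = L := hwℓ ▸ hsink v hvsink
  have hlong := blue_to_sink_long_general hcol (hw0 ▸ hcu) (htop ▸ hLpos.ne') hedges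
  omega
end

section
/- Let V be a finite set and let F and S be two sets of directed edges on V (irreflexive subsets of V × V) such that: in the digraph (V,F) every vertex has in-degree at most 1, (V,F) has no directed cycle, and every directed path in (V,F) has at most D edges. Then for every vertex u ∈ V, the number of ancestors of u in the digraph (V, F ∪ S), i.e., the number of vertices v ≠ u admitting a directed path from v to u using edges of F ∪ S, is at most (|S| + 1)·(D + 1) − 1. -/
/-- A directed path with `ℓ` edges along the edge relation `E`: a sequence
`w 0, w 1, …, w ℓ` of distinct vertices with consecutive edges. -/
def IsPathOn {V : Type*} (E : V → V → Prop) (ℓ : ℕ) (w : ℕ → V) : Prop :=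
  (∀ a ≤ ℓ, ∀ b ≤ ℓ, w a = w b → a = b) ∧ ∀ a < ℓ, E (w a) (w (a + 1))

/-! Cut a path to `u` in `F ∪ S` at its first vertex that is `u` or the tail of an edge of `S`: the
edges before the cut lie in `F`. So every vertex with a path to `u`, `u` itself included, has an
`F`-path of length at most `D` to one of at most `|S| + 1` vertices `t`. Walking back from `t` along
`F` leaves no choice, as in-degrees are at most `1`, so `t` and the length determine the vertex. -/

section

variable {V : Type*} {E F : V → V → Prop} {ℓ m D : ℕ} {u v v' : V} {w w' : ℕ → V}

/-- There is a directed path with exactly `ℓ` edges from `v` to `u` along `E`. For `ℓ = 0` this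
means `v = u`. -/
def HasPath (E : V → V → Prop) (ℓ : ℕ) (v u : V) : Prop :=
  ∃ w : ℕ → V, IsPathOn E ℓ w ∧ w 0 = v ∧ w ℓ = u

/-- The ancestors of `u` in the digraph with edge relation `E`. A vertex is never its own
ancestor. -/
def ancestors (E : V → V → Prop) (u : V) : Set V :=
  {v | v ≠ u ∧ ∃ ℓ, HasPath E ℓ v u}

theorem IsPathOn.of_le (h : IsPathOn E ℓ w) (hm : m ≤ ℓ) : IsPathOn E m w :=
  ⟨fun a ha b hb => h.1 a (ha.trans hm) b (hb.trans hm), fun a ha => h.2 a (ha.trans_le hm)⟩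

theorem IsPathOn.start_eq_of_end_eq (hE : Relator.LeftUnique E) (h : IsPathOn E ℓ w)
    (h' : IsPathOn E ℓ w') (hend : w ℓ = w' ℓ) : w 0 = w' 0 := by
  induction ℓ with
  | zero => exact hend
  | succ ℓ ih =>
    refine ih (h.of_le ℓ.le_succ) (h'.of_le ℓ.le_succ) (hE (h.2 ℓ ℓ.lt_succ_self) ?_)
    exact hend ▸ h'.2 ℓ ℓ.lt_succ_self

theorem HasPath.start_unique (hE : Relator.LeftUnique E) (h : HasPath E ℓ v u)
    (h' : HasPath E ℓ v' u) : v = v' := by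
  obtain ⟨w, hw, rfl, hwu⟩ := h
  obtain ⟨w', hw', rfl, hwu'⟩ := h'
  exact hw.start_eq_of_end_eq hE hw' (hwu.trans hwu'.symm)

theorem hasPath_zero (E : V → V → Prop) (u : V) : HasPath E 0 u u :=
  ⟨fun _ => u, ⟨by omega, by omega⟩, rfl, rfl⟩

theorem exists_hasPath_of_mem_insert_ancestors (hv : v ∈ insert u (ancestors E u)) :
    ∃ ℓ, HasPath E ℓ v u := by
  rcases hv with rfl | ⟨-, hpath⟩
  · exact ⟨0, hasPath_zero E v⟩
  · exact hpath

theorem HasPath.exists_hasPath_to_mem {T : Set V} (hEF : ∀ a b, a ∉ T → E a b → F a b)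
    (hu : u ∈ T) (h : HasPath E ℓ v u) : ∃ t ∈ T, ∃ m, HasPath F m v t := by
  classical
  obtain ⟨w, hw, rfl, rfl⟩ := h
  have hvisit : ∃ i, w i ∈ T := ⟨ℓ, hu⟩
  have hprefix : IsPathOn E (Nat.find hvisit) w := hw.of_le (Nat.find_min' hvisit hu)
  exact ⟨_, Nat.find_spec hvisit, _, w,
    ⟨hprefix.1, fun a ha => hEF _ _ (Nat.find_min hvisit ha) (hprefix.2 a ha)⟩, rfl, rfl⟩

theorem encard_setOf_exists_hasPath_le (hE : Relator.LeftUnique E)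
    (hD : ∀ ℓ w, IsPathOn E ℓ w → ℓ ≤ D) (T : Set V) :
    {v | ∃ t ∈ T, ∃ ℓ, HasPath E ℓ v t}.encard ≤ T.encard * (D + 1) := by
  choose! t ht ℓ hpath using fun v (hv : ∃ t ∈ T, ∃ ℓ, HasPath E ℓ v t) => hv
  have hlength : ∀ v, (∃ t ∈ T, ∃ ℓ, HasPath E ℓ v t) → ℓ v ≤ D := fun v hv =>
    let ⟨w, hw, _⟩ := hpath v hv
    hD _ w hw
  calc {v | ∃ t ∈ T, ∃ ℓ, HasPath E ℓ v t}.encard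
      ≤ (T ×ˢ Set.Iic D).encard := by
        refine Set.encard_le_encard_of_injOn (f := fun v => (t v, ℓ v))
          (fun v hv => ⟨ht v hv, hlength v hv⟩) fun v hv v' hv' heq => ?_
        obtain ⟨htarget, hlen⟩ : t v = t v' ∧ ℓ v = ℓ v' := Prod.ext_iff.1 heq
        exact (hpath v hv).start_unique hE (htarget ▸ hlen ▸ hpath v' hv')
    _ = T.encard * (D + 1) := by
        rw [Set.encard_prod, ← Finset.coe_Iic, Set.encard_coe_eq_coe_finsetCard, Nat.card_Iic,
          Nat.cast_succ]

theorem ancestors_bound_general {F S : Set (V × V)}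
    (hindeg : Relator.LeftUnique fun a b => (a, b) ∈ F)
    (hD : ∀ ℓ w, IsPathOn (fun a b => (a, b) ∈ F) ℓ w → ℓ ≤ D) (u : V) :
    (ancestors (fun a b => (a, b) ∈ F ∪ S) u).encard + 1 ≤ (S.encard + 1) * (D + 1) := by
  set T : Set V := insert u (Prod.fst '' S)
  have hT : T.encard ≤ S.encard + 1 :=
    (Set.encard_insert_le _ u).trans (by gcongr; exact Set.encard_image_le _ S)
  have hleave : ∀ a b, a ∉ T → (a, b) ∈ F ∪ S → (a, b) ∈ F := fun a b ha hab =>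
    hab.resolve_right fun hS => ha (.inr ⟨(a, b), hS, rfl⟩)
  calc (ancestors (fun a b => (a, b) ∈ F ∪ S) u).encard + 1
      = (insert u (ancestors (fun a b => (a, b) ∈ F ∪ S) u)).encard :=
        (Set.encard_insert_of_notMem fun hu => hu.1 rfl).symm
    _ ≤ {v | ∃ t ∈ T, ∃ ℓ, HasPath (fun a b => (a, b) ∈ F) ℓ v t}.encard :=
        Set.encard_le_encard fun v hv =>
          let ⟨_, hpath⟩ := exists_hasPath_of_mem_insert_ancestors hv
          hpath.exists_hasPath_to_mem hleave (Set.mem_insert u _)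
    _ ≤ T.encard * (D + 1) := encard_setOf_exists_hasPath_le hindeg hD T
    _ ≤ (S.encard + 1) * (D + 1) := by gcongr

end

/-- Let `F` and `S` be edge sets on a finite vertex set `V` such that
`(V, F)` has in-degree at most 1, no directed cycle, and all directed paths of length at
most `D`.  Then every vertex of `(V, F ∪ S)` has at most `(|S| + 1)·(D + 1) - 1`
ancestors. -/
theorem ancestors_bound {V : Type*} [Fintype V] [DecidableEq V]
    (F S : Finset (V × V))
    (hFirr : ∀ e ∈ F, e.1 ≠ e.2) (hSirr : ∀ e ∈ S, e.1 ≠ e.2)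
    (hindeg : ∀ u u' v : V, (u, v) ∈ F → (u', v) ∈ F → u = u')
    (hacyc : Acyclic (fun u v => (u, v) ∈ F))
    (D : ℕ) (hD : ∀ (ℓ : ℕ) (w : ℕ → V), IsPathOn (fun u v => (u, v) ∈ F) ℓ w → ℓ ≤ D)
    (u : V) :
    {v : V | v ≠ u ∧ ∃ (ℓ : ℕ) (w : ℕ → V),
        IsPathOn (fun a b => (a, b) ∈ F ∪ S) ℓ w ∧ w 0 = v ∧ w ℓ = u}.ncard
      ≤ (S.card + 1) * (D + 1) - 1 := by
  have h := ancestors_bound_general (F := F) (S := S) (fun _ _ _ => hindeg _ _ _) hD u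
  exact Nat.le_sub_of_add_le (mod_cast (add_le_add_left (Set.ncard_le_encard _) 1).trans h)
end
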